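/- arXiv:math/0506519 — 6 statements merged into one kernel-verified Lean document; each statement's English description precedes it below -/
import Mathlib

section
/- Let K be a number field. If an element w of the ℝ-algebra ℝ ⊗_ℚ K has the property that for every α ∈ K the trace Tr_{(ℝ⊗_ℚK)/ℝ}(w · (1 ⊗ α)) lies in the image of ℚ in ℝ (i.e. is a rational number), then w lies in the image of K under the canonical map α ↦ 1 ⊗ α. (Paper's Lemma 1: if w ∈ K_∞ satisfies Tr(wK) ⊆ ℚ then w ∈ K.) -/
open TensorProduct

/-- The trace of a pure tensor `1 ⊗ x` in a base change is the image of the trace of `x`. -/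
theorem trace_one_tmul {R S : Type*} (A : Type*) [CommRing R] [CommRing S] [CommRing A]
    [Algebra R S] [Algebra R A] [Module.Free R S] [Module.Finite R S] (x : S) :
    Algebra.trace A (A ⊗[R] S) (1 ⊗ₜ[R] x) = algebraMap R A (Algebra.trace R S x) := by
  rw [Algebra.trace_apply, Algebra.trace_apply, ← LinearMap.trace_baseChange]
  congr 1
  ext y
  simp

/-- The coordinates of an element of a base change of a separable extension are its trace pairings
with the trace-dual basis. -/
theorem trace_mul_one_tmul_traceDual {F L A ι : Type*} [Field F] [Field L] [CommRing A]
    [Algebra F L] [Algebra F A] [FiniteDimensional F L] [Algebra.IsSeparable F L]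
    [Finite ι] [DecidableEq ι] (b : Module.Basis ι F L) (w : A ⊗[F] L) (j : ι) :
    Algebra.trace A (A ⊗[F] L) (w * (1 ⊗ₜ[F] b.traceDual j)) =
      (b.baseChange A).repr w j := by
  have := Fintype.ofFinite ι
  conv_lhs => rw [← (b.baseChange A).sum_repr w]
  simp only [Module.Basis.baseChange_apply, Finset.sum_mul, smul_mul_assoc,
    Algebra.TensorProduct.tmul_mul_tmul, one_mul, map_sum, map_smul, trace_one_tmul,
    b.trace_mul_traceDual]
  simp

/-- Paper's Lemma 1: if `w ∈ K_∞ = ℝ ⊗_ℚ K` satisfies `Tr(w·K) ⊆ ℚ`, then `w ∈ K`. -/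
theorem stmt_0 (K : Type*) [Field K] [NumberField K]
    (w : ℝ ⊗[ℚ] K)
    (hw : ∀ α : K, ∃ q : ℚ,
      Algebra.trace ℝ (ℝ ⊗[ℚ] K) (w * (1 ⊗ₜ[ℚ] α)) = (q : ℝ)) :
    ∃ α : K, w = 1 ⊗ₜ[ℚ] α := by
  classical
  let b := Module.finBasis ℚ K
  choose q hq using fun j ↦ hw (b.traceDual j)
  refine ⟨∑ j, q j • b j, ?_⟩
  rw [← (b.baseChange ℝ).sum_repr w, TensorProduct.tmul_sum]
  refine Finset.sum_congr rfl fun j _ ↦ ?_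
  rw [← trace_mul_one_tmul_traceDual, hq, Module.Basis.baseChange_apply,
    TensorProduct.smul_tmul', ← TensorProduct.smul_tmul, smul_eq_mul, mul_one, Rat.smul_one_eq_cast]
end

section
/- Let 𝒦 be an algebraic field extension of ℚ containing a primitive n-th root of unity for every positive integer n (e.g. any field containing the maximal abelian extension ℚ^ab). Suppose that to every finite-dimensional intermediate field K of 𝒦/ℚ there is assigned an element a_K of the ring of integers 𝓞_K (the integral closure of ℤ in K), such that whenever K ⊆ L are finite-dimensional intermediate fields the relative trace satisfies Tr_{L/K}(a_L) = a_K. Then a_K = 0 for every finite-dimensional intermediate field K. (Paper's Theorem 1: the trace inverse limit of the rings of integers is {0}.) -/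
/-- The inclusion of an intermediate field `K` of `𝒦/ℚ` into a larger intermediate field `L`,
as a ring homomorphism. -/
def inclusionRingHom {𝒦 : Type*} [Field 𝒦] [Algebra ℚ 𝒦]
    {K L : IntermediateField ℚ 𝒦} (hKL : K ≤ L) : K →+* L where
  toFun x := ⟨x.1, hKL x.2⟩
  map_one' := rfl
  map_mul' _ _ := rfl
  map_zero' := rfl
  map_add' _ _ := rfl

/-- Over `ℚ`, the trace of a power of a primitive `2 ^ (n + 1)`-th root of unity is divisible
by `2 ^ n`. -/
theorem exists_trace_zeta_pow_eq (F : Type*) [Field F] [CharZero F] (n : ℕ)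
    [IsCyclotomicExtension {2 ^ (n + 1)} ℚ F] (i : ℕ) :
    ∃ z : ℤ, Algebra.trace ℚ F (IsCyclotomicExtension.zeta (2 ^ (n + 1)) ℚ F ^ i) =
      2 ^ n * (z : ℚ) := by
  set ζ := IsCyclotomicExtension.zeta (2 ^ (n + 1)) ℚ F with hζdef
  have hζ : IsPrimitiveRoot ζ (2 ^ (n + 1)) := IsCyclotomicExtension.zeta_spec _ ℚ F
  have hneg : ζ ^ 2 ^ n = -1 :=
    (hζ.pow (a := 2 ^ n) (b := 2) (by positivity) (pow_succ 2 n)).eq_neg_one_of_two_right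
  have hfinrank : Module.finrank ℚ F = 2 ^ n := by
    rw [IsCyclotomicExtension.Rat.finrank (2 ^ (n + 1)) F,
      Nat.totient_prime_pow_succ Nat.prime_two]
    simp
  by_cases hi : 2 ^ n ∣ i
  · obtain ⟨m, rfl⟩ := hi
    refine ⟨(-1) ^ m, ?_⟩
    have hpow : ζ ^ (2 ^ n * m) = algebraMap ℚ F ((-1) ^ m) := by
      rw [pow_mul, hneg]
      simp
    rw [hpow, Algebra.trace_algebraMap, hfinrank]
    simp
  · -- an automorphism sends `ζ ^ i` to `-ζ ^ i`
    have hi0 : i ≠ 0 := by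
      rintro rfl
      simp at hi
    obtain ⟨k, m, hm, rfl⟩ := Nat.exists_eq_two_pow_mul_odd hi0
    have hk : k < n := by
      by_contra! h
      exact hi ((pow_dvd_pow 2 h).mul_right m)
    have hcop : (1 + 2 ^ (n - k)).Coprime (2 ^ (n + 1)) := by
      refine Nat.Coprime.pow_right _ (Nat.coprime_two_right.mpr ?_)
      exact odd_one.add_even (even_two.pow_of_ne_zero (by omega))
    have hirr : Irreducible (Polynomial.cyclotomic (2 ^ (n + 1)) ℚ) :=
      Polynomial.cyclotomic.irreducible_rat (by positivity)
    let σ := IsCyclotomicExtension.fromZetaAut (hζ.pow_of_coprime _ hcop) hirr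
    have hσ : σ ζ = ζ ^ (1 + 2 ^ (n - k)) :=
      IsCyclotomicExtension.fromZetaAut_spec (hζ.pow_of_coprime _ hcop) hirr
    have hσpow : σ (ζ ^ (2 ^ k * m)) = -ζ ^ (2 ^ k * m) := by
      have hexp : (1 + 2 ^ (n - k)) * (2 ^ k * m) = 2 ^ k * m + 2 ^ n * m := by
        rw [← Nat.sub_add_cancel hk.le, pow_add, Nat.add_sub_cancel]
        ring
      rw [map_pow, hσ, ← pow_mul, hexp, pow_add, pow_mul ζ (2 ^ n), hneg, hm.neg_one_pow]
      ring
    have htr := Algebra.trace_eq_of_algEquiv σ (ζ ^ (2 ^ k * m))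
    rw [hσpow, map_neg] at htr
    refine ⟨0, ?_⟩
    rw [Int.cast_zero, mul_zero]
    linarith

/-- The trace to `ℚ` of an integer of the `2 ^ (n + 1)`-th cyclotomic field is divisible
by `2 ^ n`. -/
theorem exists_trace_eq_two_pow_mul (F : Type*) [Field F] [Algebra ℚ F] (n : ℕ)
    [IsCyclotomicExtension {2 ^ (n + 1)} ℚ F] {x : F} (hx : IsIntegral ℤ x) :
    ∃ z : ℤ, Algebra.trace ℚ F x = 2 ^ n * (z : ℚ) := by
  have : CharZero F := algebraRat.charZero F
  obtain rfl : ‹Algebra ℚ F› = DivisionRing.toRatAlgebra := Subsingleton.elim _ _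
  have hζ := IsCyclotomicExtension.zeta_spec (2 ^ (n + 1)) ℚ F
  have := IsCyclotomicExtension.Rat.isIntegralClosure_adjoin_singleton_of_prime_pow hζ
  obtain ⟨⟨y, hy⟩, rfl⟩ := (this.isIntegral_iff).mp hx
  change ∃ z : ℤ, Algebra.trace ℚ F y = 2 ^ n * (z : ℚ)
  rw [Algebra.adjoin_singleton_eq_range_aeval] at hy
  obtain ⟨p, rfl⟩ := hy
  choose z hz using exists_trace_zeta_pow_eq F n
  refine ⟨p.sum fun i c ↦ c * z i, ?_⟩
  change Algebra.trace ℚ F (Polynomial.aeval _ p) = _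
  rw [Polynomial.aeval_eq_sum_range, Polynomial.sum_over_range p (by simp), map_sum,
    Int.cast_sum, Finset.mul_sum]
  refine Finset.sum_congr rfl fun i _ ↦ ?_
  rw [map_zsmul, hz, zsmul_eq_mul, Int.cast_mul]
  ring

/-- If `L` contains `K` and the `2 ^ (n + 1)`-th cyclotomic field, then `Tr_{K/ℚ}(b Tr_{L/K}(x))`
is divisible by `2 ^ n` for all integers `b` of `K` and `x` of `L`. -/
theorem exists_trace_mul_trace_eq_two_pow_mul (K F L : Type*) [Field K] [Field F] [Field L]
    [Algebra ℚ K] [Algebra ℚ F] [Algebra ℚ L] [Algebra K L] [Algebra F L] [IsScalarTower ℚ K L]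
    [IsScalarTower ℚ F L] [FiniteDimensional ℚ L] (n : ℕ)
    [IsCyclotomicExtension {2 ^ (n + 1)} ℚ F] {b : K} (hb : IsIntegral ℤ b)
    {x : L} (hx : IsIntegral ℤ x) :
    ∃ z : ℤ, Algebra.trace ℚ K (b * Algebra.trace K L x) = 2 ^ n * (z : ℚ) := by
  have : FiniteDimensional ℚ K := FiniteDimensional.left ℚ K L
  have : FiniteDimensional K L := FiniteDimensional.right ℚ K L
  have : FiniteDimensional ℚ F := FiniteDimensional.left ℚ F L
  have : FiniteDimensional F L := FiniteDimensional.right ℚ F L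
  rw [← smul_eq_mul, ← map_smul, Algebra.trace_trace, ← Algebra.trace_trace (S := F),
    Algebra.smul_def]
  exact exists_trace_eq_two_pow_mul F n (Algebra.isIntegral_trace (hb.algebraMap.mul hx))

theorem Int.eq_zero_of_forall_two_pow_dvd {m : ℤ} (h : ∀ n : ℕ, 2 ^ n ∣ m) : m = 0 := by
  by_contra hm
  obtain ⟨n, hn⟩ := (Int.finiteMultiplicity_iff (a := 2) (b := m)).mpr ⟨by decide, hm⟩
  exact hn (h (n + 1))

/-- Paper's Theorem 1: for a field `𝒦` containing `ℚ^ab` (expressed by containing a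
primitive `n`-th root of unity for every `n > 0`), any family of algebraic integers
`a_K ∈ 𝓞_K`, indexed by the finite-dimensional intermediate fields `K` of `𝒦/ℚ` and
compatible under the relative trace maps, is identically zero. -/
theorem stmt_1 (𝒦 : Type*) [Field 𝒦] [Algebra ℚ 𝒦] [Algebra.IsAlgebraic ℚ 𝒦]
    (hroots : ∀ n : ℕ, 0 < n → ∃ ζ : 𝒦, IsPrimitiveRoot ζ n)
    (a : ∀ K : IntermediateField ℚ 𝒦, FiniteDimensional ℚ K → integralClosure ℤ K)
    (hcompat : ∀ (K L : IntermediateField ℚ 𝒦) (hK : FiniteDimensional ℚ K)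
      (hL : FiniteDimensional ℚ L) (hKL : K ≤ L),
      letI : Algebra K L := (inclusionRingHom hKL).toAlgebra
      Algebra.trace K L ((a L hL : L)) = ((a K hK : K))) :
    ∀ (K : IntermediateField ℚ 𝒦) (hK : FiniteDimensional ℚ K), a K hK = 0 := by
  intro K hK
  -- overrides `DivisionRing.toRatAlgebra`
  let (E : IntermediateField ℚ 𝒦) : Algebra ℚ E := E.algebra'
  by_contra hne
  have hne' : (a K hK : K) ≠ 0 := fun h ↦ hne (Subtype.ext h)
  have halg : IsAlgebraic ℤ (a K hK : K)⁻¹ :=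
    (IsFractionRing.isAlgebraic_iff ℤ ℚ K).mpr (.of_finite ℚ _)
  obtain ⟨m, hm0, hb⟩ := halg.exists_integral_multiple
  set b : K := m • (a K hK : K)⁻¹ with hbdef
  have htrace : Algebra.trace ℚ K (b * (a K hK : K)) = ((Module.finrank ℚ K * m : ℤ) : ℚ) := by
    have hmul : b * (a K hK : K) = algebraMap ℚ K m := by
      rw [hbdef, smul_mul_assoc, inv_mul_cancel₀ hne']
      simp
    rw [hmul, Algebra.trace_algebraMap]
    simp
  have hprod : (Module.finrank ℚ K * m : ℤ) ≠ 0 :=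
    mul_ne_zero (by exact_mod_cast Module.finrank_pos.ne') hm0
  refine hprod (Int.eq_zero_of_forall_two_pow_dvd fun n ↦ ?_)
  obtain ⟨ζ, hζ⟩ := hroots (2 ^ (n + 1)) (by positivity)
  let F : IntermediateField ℚ 𝒦 := IntermediateField.adjoin ℚ {ζ}
  have : IsCyclotomicExtension {2 ^ (n + 1)} ℚ F :=
    hζ.intermediateField_adjoin_isCyclotomicExtension ℚ
  have : FiniteDimensional ℚ F := IsCyclotomicExtension.finiteDimensional {2 ^ (n + 1)} ℚ F
  let L : IntermediateField ℚ 𝒦 := K ⊔ F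
  have hL : FiniteDimensional ℚ L := IntermediateField.finiteDimensional_sup K F
  have hKL : K ≤ L := le_sup_left
  have hFL : F ≤ L := le_sup_right
  let : Algebra K L := (inclusionRingHom hKL).toAlgebra
  let : Algebra F L := (inclusionRingHom hFL).toAlgebra
  have := IsScalarTower.of_algebraMap_eq (R := ℚ) (S := K) (A := L) fun _ ↦ rfl
  have := IsScalarTower.of_algebraMap_eq (R := ℚ) (S := F) (A := L) fun _ ↦ rfl
  have hcomp : Algebra.trace K L (a L hL : L) = (a K hK : K) := hcompat K L hK hL hKL
  obtain ⟨z, hz⟩ := exists_trace_mul_trace_eq_two_pow_mul K F L n hb (a L hL).2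
  rw [hcomp, htrace] at hz
  exact ⟨z, by exact_mod_cast hz⟩
end

section
/- Let k ≥ 1 and let K be the 2^k-th cyclotomic field over ℚ, of degree d = 2^{k−1}. Then the image of the ring of integers 𝓞_K under the trace map Tr_{K/ℚ} : K → ℚ is exactly the set {2^{k−1}·n : n ∈ ℤ} ⊆ ℚ, i.e. Tr(𝓞_K) is the ideal (d) of ℤ. -/
open Polynomial in
/-- The trace of a primitive `2^(j+2)`-th root of unity vanishes. -/
theorem IsPrimitiveRoot.trace_eq_zero_of_four_dvd_two_pow {K : Type*} [Field K] [NumberField K]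
    {x : K} {j : ℕ} (hx : IsPrimitiveRoot x (2 ^ (j + 2))) : Algebra.trace ℚ K x = 0 := by
  have hmin : minpoly ℚ x = X ^ (2 ^ (j + 1)) + C 1 := by
    rw [← cyclotomic_eq_minpoly_rat hx (by positivity),
      cyclotomic_prime_pow_eq_geom_sum Nat.prime_two, Finset.sum_range_succ,
      Finset.sum_range_one, pow_zero, pow_one, add_comm, C_1]
  have hpos : 0 < 2 ^ (j + 1) := by positivity
  have hlt : 1 < 2 ^ (j + 1) := Nat.one_lt_two_pow (by omega)
  rw [trace_eq_finrank_mul_minpoly_nextCoeff, hmin,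
    nextCoeff_of_natDegree_pos (by rw [natDegree_X_pow_add_C]; exact hpos),
    natDegree_X_pow_add_C, coeff_add, coeff_X_pow, coeff_C, if_neg (by omega), if_neg (by omega)]
  simp

/-- A `2`-power root of unity is `1`, is `-1`, or has trace zero. -/
theorem eq_one_or_eq_neg_one_or_trace_eq_zero_of_pow_two_pow_eq_one {K : Type*} [Field K]
    [NumberField K] {x : K} {k : ℕ} (hx : x ^ 2 ^ k = 1) :
    x = 1 ∨ x = -1 ∨ Algebra.trace ℚ K x = 0 := by
  obtain ⟨j, -, hj⟩ := (Nat.dvd_prime_pow Nat.prime_two).1 (orderOf_dvd_of_pow_eq_one hx)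
  have hprim : IsPrimitiveRoot x (2 ^ j) := hj ▸ IsPrimitiveRoot.orderOf x
  match j, hprim with
  | 0, h => exact .inl (by simpa using h)
  | 1, h => exact .inr (.inl (IsPrimitiveRoot.eq_neg_one_of_two_right (by simpa using h)))
  | j + 2, h => exact .inr (.inr h.trace_eq_zero_of_four_dvd_two_pow)

open Polynomial in
/-- The image of the ring of integers of the `2^k`-th cyclotomic field under the trace is the
ideal generated by the degree `2^(k-1)`. -/
theorem IsCyclotomicExtension.trace_image_integralClosure_two_pow {K : Type*} [Field K]
    [NumberField K] {k : ℕ} (hk : 1 ≤ k) [IsCyclotomicExtension {2 ^ k} ℚ K] :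
    ⇑(Algebra.trace ℚ K) '' (integralClosure ℤ K : Set K) =
      {q : ℚ | ∃ n : ℤ, q = 2 ^ (k - 1) * n} := by
  have hfinrank : (Module.finrank ℚ K : ℚ) = 2 ^ (k - 1) := by
    rw [IsCyclotomicExtension.Rat.finrank (2 ^ k) K, Nat.totient_prime_pow Nat.prime_two hk]
    simp
  have htrace_int (n : ℤ) : Algebra.trace ℚ K n = 2 ^ (k - 1) * n := by
    have h := Algebra.trace_algebraMap (R := ℚ) (S := K) (n : ℚ)
    rwa [map_intCast, nsmul_eq_mul, hfinrank] at h
  apply Set.Subset.antisymm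
  · rintro _ ⟨x, hx, rfl⟩
    have hζ := IsCyclotomicExtension.zeta_spec (2 ^ k) ℚ K
    set ζ := IsCyclotomicExtension.zeta (2 ^ k) ℚ K
    have : Fact (Nat.Prime 2) := ⟨Nat.prime_two⟩
    have := IsCyclotomicExtension.Rat.isIntegralClosure_adjoin_singleton_of_prime_pow hζ
    obtain ⟨⟨y, hy⟩, rfl⟩ :=
      (IsIntegralClosure.isIntegral_iff (A := Algebra.adjoin ℤ {ζ})).1 hx
    rw [Algebra.adjoin_singleton_eq_range_aeval] at hy
    obtain ⟨p, rfl⟩ := hy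
    change ∃ n : ℤ, Algebra.trace ℚ K (aeval ζ p) = _
    clear hx hy
    induction p using Polynomial.induction_on' with
    | add p q hp hq =>
      obtain ⟨a, ha⟩ := hp
      obtain ⟨b, hb⟩ := hq
      exact ⟨a + b, by rw [map_add, map_add, ha, hb]; push_cast; ring⟩
    | monomial i a =>
      have hpow : (ζ ^ i) ^ 2 ^ k = 1 := by rw [pow_right_comm, hζ.pow_eq_one, one_pow]
      rw [aeval_monomial, eq_intCast]
      rcases eq_one_or_eq_neg_one_or_trace_eq_zero_of_pow_two_pow_eq_one hpow with h | h | h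
      · exact ⟨a, by rw [h, mul_one, htrace_int]⟩
      · exact ⟨-a, by rw [h, mul_neg_one, map_neg, htrace_int]; push_cast; ring⟩
      · exact ⟨0, by rw [← zsmul_eq_mul, map_zsmul, h]; simp⟩
  · rintro _ ⟨n, rfl⟩
    exact ⟨n, isIntegral_algebraMap (R := ℤ) (A := K) (x := n), htrace_int n⟩


set_option synthInstance.maxHeartbeats 400000 in
/-- For the `2^k`-th cyclotomic field `K` (`k ≥ 1`), the image of the ring of integers
`𝓞_K` under the trace map `Tr_{K/ℚ} : K → ℚ` is exactly `{2^(k-1)·n : n ∈ ℤ}`,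
i.e. the ideal of `ℤ` generated by the degree `d = 2^(k-1)`. -/
theorem stmt_3 (k : ℕ) (hk : 1 ≤ k) :
    ⇑(Algebra.trace ℚ (CyclotomicField (2 ^ k : ℕ+) ℚ)) ''
        (integralClosure ℤ (CyclotomicField (2 ^ k : ℕ+) ℚ) : Set (CyclotomicField (2 ^ k : ℕ+) ℚ))
      = {q : ℚ | ∃ n : ℤ, q = 2 ^ (k - 1) * n} := by
  have : IsCyclotomicExtension {2 ^ k} ℚ (CyclotomicField (2 ^ k : ℕ+) ℚ) := by
    convert CyclotomicField.isCyclotomicExtension ((2 ^ k : ℕ+) : ℕ) ℚ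
    · simp
    · rfl
    · exact Subsingleton.elim _ _
  convert IsCyclotomicExtension.trace_image_integralClosure_two_pow
    (K := CyclotomicField (2 ^ k : ℕ+) ℚ) hk <;> exact Subsingleton.elim _ _
end

section
/- Let K be a number field, V = ℝ ⊗_ℚ K with algebra trace Tr_V : V → ℝ over ℝ, and embed 𝓞_K into V by a ↦ 1 ⊗ a. For every continuous group homomorphism χ : (V, +) → U(1) satisfying χ(1 ⊗ a) = 1 for all a ∈ 𝓞_K, there exists a unique α ∈ K such that Tr_{K/ℚ}(α·a) ∈ ℤ for all a ∈ 𝓞_K (i.e. α lies in the inverse different 𝔡_K^{-1}) and χ(z) = exp(2πi · Tr_V(z · (1 ⊗ α))) for all z ∈ V. (Part of the paper's Theorem 5: Char(𝕋_K) ≅ 𝔡_K^{-1}, where 𝕋_K = K_∞/𝓞_K is the Minkowski torus.) -/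
open TensorProduct NumberField

/-- A continuous character of `ℝ` with values in the circle is `t ↦ exp (i c t)` for some `c`. -/
theorem exists_forall_eq_circleExp_mul {φ : ℝ → Circle} (hcont : Continuous φ)
    (hadd : ∀ s t, φ (s + t) = φ s * φ t) : ∃ c : ℝ, ∀ t, φ t = Circle.exp (t * c) := by
  have h0 : φ 0 = 1 := by simpa using hadd 0 0
  obtain ⟨F, ⟨hF0, hF⟩, -⟩ := Circle.isCoveringMap_exp.existsUnique_continuousMap_lifts
    ⟨φ, hcont⟩ (a₀ := 0) (e₀ := 0) (by simp [h0])
  have hexp (t : ℝ) : Circle.exp (F t) = φ t := congrFun hF t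
  have hFadd : (fun p : ℝ × ℝ ↦ F (p.1 + p.2)) = fun p ↦ F p.1 + F p.2 :=
    Circle.isCoveringMap_exp.eq_of_comp_eq (by fun_prop) (by fun_prop)
      (by ext p; simp [hexp, hadd]) (0, 0) (by simp [hF0])
  let G : ℝ →+ ℝ := ⟨⟨F, hF0⟩, fun s t ↦ congrFun hFadd (s, t)⟩
  refine ⟨F 1, fun t ↦ ?_⟩
  have h : F (t • 1) = t • F 1 := map_real_smul G F.continuous t 1
  rw [← hexp, ← smul_eq_mul, ← h, smul_eq_mul, mul_one]

/-- A continuous character of `ℝ` trivial at `1` is `t ↦ exp (2πi n t)` for an integer `n`. -/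
theorem exists_int_forall_eq_circleExp {φ : ℝ → Circle} (hcont : Continuous φ)
    (hadd : ∀ s t, φ (s + t) = φ s * φ t) (h1 : φ 1 = 1) :
    ∃ n : ℤ, ∀ t, φ t = Circle.exp (2 * Real.pi * (t * n)) := by
  obtain ⟨c, hc⟩ := exists_forall_eq_circleExp_mul hcont hadd
  obtain ⟨n, hn⟩ := Circle.exp_eq_one.1 ((hc 1).symm.trans h1)
  refine ⟨n, fun t ↦ ?_⟩
  rw [hc t]
  congr 1
  linear_combination t * hn

/-- A real number `c` for which `t ↦ exp (2πi t c)` is identically `1` vanishes. -/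
theorem eq_zero_of_forall_circleExp_eq_one {c : ℝ}
    (h : ∀ t : ℝ, Circle.exp (2 * Real.pi * (t * c)) = 1) : c = 0 := by
  by_contra hc
  refine Circle.exp_pi_ne_one ?_
  rw [← h (1 / (2 * c))]
  congr 1
  field_simp

/-- The trace of a pure tensor in the base change of a finite free algebra. -/
theorem Algebra.trace_tmul {R A S : Type*} [CommRing R] [CommRing A] [Algebra R A] [CommRing S]
    [Algebra R S] [Module.Free R S] [Module.Finite R S] (t : A) (x : S) :
    Algebra.trace A (A ⊗[R] S) (t ⊗ₜ x) = t * algebraMap R A (Algebra.trace R S x) := by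
  have h : t ⊗ₜ[R] x = t • (1 : A) ⊗ₜ[R] x := by simp [TensorProduct.smul_tmul']
  rw [h, map_smul, smul_eq_mul, Algebra.trace_apply, Algebra.trace_apply,
    ← LinearMap.trace_baseChange, Algebra.baseChange_lmul]

/-- Part of the paper's Theorem 5: every continuous character of the Minkowski torus
`𝕋_K = K_∞/𝓞_K`, i.e. every continuous additive character `χ` of `V = ℝ ⊗_ℚ K`
(with its canonical topology as a finite-dimensional real vector space) trivial on
(the image of) `𝓞_K`, is of the form `z ↦ exp(2πi·Tr_V(z·(1 ⊗ α)))` for a unique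
`α` in the inverse different `𝔡_K⁻¹ = {α ∈ K : Tr_{K/ℚ}(α·𝓞_K) ⊆ ℤ}`. -/
theorem stmt_6 (K : Type*) [Field K] [NumberField K]
    (χ : ℝ ⊗[ℚ] K → Circle)
    (hcont : @Continuous _ _ (moduleTopology ℝ (ℝ ⊗[ℚ] K)) _ χ)
    (hhom : ∀ x y : ℝ ⊗[ℚ] K, χ (x + y) = χ x * χ y)
    (htriv : ∀ a : 𝓞 K, χ (1 ⊗ₜ[ℚ] (a : K)) = 1) :
    ∃! α : K,
      (∀ a : 𝓞 K, ∃ n : ℤ, Algebra.trace ℚ K (α * (a : K)) = (n : ℚ)) ∧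
      ∀ z : ℝ ⊗[ℚ] K,
        χ z = Circle.exp (2 * Real.pi * Algebra.trace ℝ (ℝ ⊗[ℚ] K) (z * (1 ⊗ₜ[ℚ] α))) := by
  let _ : TopologicalSpace (ℝ ⊗[ℚ] K) := moduleTopology ℝ (ℝ ⊗[ℚ] K)
  have : IsModuleTopology ℝ (ℝ ⊗[ℚ] K) := ⟨rfl⟩
  have : ContinuousAdd (ℝ ⊗[ℚ] K) := IsModuleTopology.toContinuousAdd ℝ _
  let b := integralBasis K
  have htrace (α x : K) (t : ℝ) :
      Algebra.trace ℝ (ℝ ⊗[ℚ] K) (t ⊗ₜ[ℚ] x * 1 ⊗ₜ[ℚ] α) = t * Algebra.trace ℚ K (α * x) := by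
    rw [Algebra.TensorProduct.tmul_mul_tmul, mul_one, Algebra.trace_tmul, mul_comm x,
      eq_ratCast]
  have hline (x : 𝓞 K) : ∃ n : ℤ, ∀ t : ℝ,
      χ (t ⊗ₜ[ℚ] (x : K)) = Circle.exp (2 * Real.pi * (t * n)) := by
    refine exists_int_forall_eq_circleExp (φ := fun t ↦ χ (t ⊗ₜ[ℚ] (x : K))) ?_ ?_ (htriv x)
    · refine hcont.comp ?_
      exact IsModuleTopology.continuous_of_linearMap
        ((TensorProduct.AlgebraTensorModule.mk ℚ ℝ ℝ K).flip (x : K))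
    · intro s t
      rw [TensorProduct.add_tmul, hhom]
  choose n hn using hline
  have hint (α : K) (h : ∀ z : ℝ ⊗[ℚ] K,
      χ z = Circle.exp (2 * Real.pi * Algebra.trace ℝ (ℝ ⊗[ℚ] K) (z * (1 ⊗ₜ[ℚ] α)))) (a : 𝓞 K) :
      Algebra.trace ℚ K (α * (a : K)) = (n a : ℚ) := by
    have : (Algebra.trace ℚ K (α * (a : K)) : ℝ) - n a = 0 :=
      eq_zero_of_forall_circleExp_eq_one fun t ↦ by
        rw [mul_sub, mul_sub, Circle.exp_sub, ← hn, ← htrace, ← h, div_self']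
    exact_mod_cast sub_eq_zero.1 this
  have hb (i) : b i = (RingOfIntegers.basis K i : K) := integralBasis_apply K i
  classical
  let α : K := ∑ j, (n (RingOfIntegers.basis K j) : ℚ) • b.traceDual j
  have hα (i) : Algebra.trace ℚ K (α * b i) = n (RingOfIntegers.basis K i) := by
    simp [α, Finset.sum_mul]
  have hχ (z : ℝ ⊗[ℚ] K) :
      χ z = Circle.exp (2 * Real.pi * Algebra.trace ℝ (ℝ ⊗[ℚ] K) (z * (1 ⊗ₜ[ℚ] α))) := by
    let X : ℝ ⊗[ℚ] K →+ Additive Circle := AddMonoidHom.mk' (fun z ↦ Additive.ofMul (χ z)) hhom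
    let Y : ℝ ⊗[ℚ] K →+ Additive Circle := AddMonoidHom.mk' (fun z ↦ Additive.ofMul
      (Circle.exp (2 * Real.pi * Algebra.trace ℝ (ℝ ⊗[ℚ] K) (z * (1 ⊗ₜ[ℚ] α)))))
      fun x y ↦ by rw [add_mul, map_add, mul_add, Circle.exp_add, ofMul_mul]
    have hbasis (i) (t : ℝ) : X (t ⊗ₜ b i) = Y (t ⊗ₜ b i) := by
      change χ _ = Circle.exp _
      rw [htrace, hα, hb, hn, Rat.cast_intCast]
    change X z = Y z
    rw [← (Algebra.TensorProduct.basis ℝ b).sum_repr z, map_sum, map_sum]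
    refine Finset.sum_congr rfl fun i _ ↦ ?_
    rw [Algebra.TensorProduct.basis_apply, TensorProduct.smul_tmul', smul_eq_mul, mul_one, hbasis]
  refine ⟨α, ⟨fun a ↦ ⟨n a, hint α hχ a⟩, hχ⟩, fun β ⟨_, hβ⟩ ↦ b.traceDual.ext_elem fun i ↦ ?_⟩
  rw [Module.Basis.traceDual_repr_apply, Module.Basis.traceDual_repr_apply,
    Algebra.traceForm_apply, Algebra.traceForm_apply, hb, hint β hβ, hint α hχ]
end

section
/- Let F : ℂ → ℂ be holomorphic on the upper half-plane ℍ = {z ∈ ℂ : Im z > 0} and not identically zero on ℍ. Suppose that for all positive integers m and n and all z ∈ ℍ, F((m/n)·z)^n = F(z)^m. Then there exists α ∈ ℂ such that F(z) = exp(2πi·α·z) for all z ∈ ℍ. (The case K = ℚ of the paper's Lemma 2: a holomorphic function on ℍ satisfying the functional equation F(ρ^r) = F(ρ)^r for all positive rationals r is an exponential.) -/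
open Complex

lemma isOpen_im_pos : IsOpen {z : ℂ | 0 < z.im} :=
  isOpen_lt continuous_const continuous_im

lemma isPreconnected_im_pos : IsPreconnected {z : ℂ | 0 < z.im} :=
  (convex_halfSpace_im_gt 0).isPreconnected

lemma ratio_mul_im_pos {m n : ℕ} (hm : 0 < m) (hn : 0 < n) {z : ℂ} (hz : 0 < z.im) :
    0 < ((((m : ℝ) / (n : ℝ)) : ℂ) * z).im := by
  rw [← ofReal_div, im_ofReal_mul]
  positivity

/-- Identity theorem on the upper half-plane along the positive rational multiples of a point. -/
lemma eq_const_of_eq_on_rational_multiples {g : ℂ → ℂ}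
    (hg : DifferentiableOn ℂ g {z : ℂ | 0 < z.im}) {z₀ : ℂ} (hz₀ : 0 < z₀.im)
    (h : ∀ m n : ℕ, 0 < m → 0 < n → g ((((m : ℝ) / (n : ℝ)) : ℂ) * z₀) = g z₀) :
    ∀ z ∈ {z : ℂ | 0 < z.im}, g z = g z₀ := by
  have hz₀' : z₀ ≠ 0 := fun h0 => by simp [h0] at hz₀
  refine (hg.analyticOnNhd isOpen_im_pos).eqOn_of_preconnected_of_frequently_eq
    (analyticOnNhd_const (v := g z₀)) isPreconnected_im_pos hz₀ ?_
  have hlim : Filter.Tendsto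
      (fun k : ℕ => ((((k + 2 : ℕ) : ℝ) / ((k + 1 : ℕ) : ℝ)) : ℂ) * z₀)
      Filter.atTop (nhdsWithin z₀ {z₀}ᶜ) := by
    have hk (k : ℕ) : ((((k + 2 : ℕ) : ℝ) / ((k + 1 : ℕ) : ℝ)) : ℂ)
        = 1 + 1 / ((k : ℂ) + 1) := by
      have : (k : ℂ) + 1 ≠ 0 := Nat.cast_add_one_ne_zero k
      push_cast
      field_simp
      ring
    refine tendsto_nhdsWithin_iff.2 ⟨?_, Filter.Eventually.of_forall fun k => ?_⟩
    · simp only [hk]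
      simpa using ((tendsto_one_div_add_atTop_nhds_zero_nat (𝕜 := ℂ)).const_add 1).mul_const z₀
    · rw [hk, Set.mem_compl_singleton_iff]
      intro he
      have : 1 / ((k : ℂ) + 1) * z₀ = 0 := by linear_combination he
      simp [hz₀', Nat.cast_add_one_ne_zero k] at this
  exact hlim.frequently
    (Filter.Frequently.of_forall fun k => h (k + 2) (k + 1) (by omega) (by omega))

/-- The case `K = ℚ` of the paper's Lemma 2: a holomorphic function on the upper
half-plane `ℍ`, not identically zero there, satisfying `F(r·z)^n = F(z)^m` for all
positive rationals `r = m/n`, is of the form `F(z) = exp(2πi·α·z)`. -/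
theorem stmt_9 (F : ℂ → ℂ)
    (hol : DifferentiableOn ℂ F {z : ℂ | 0 < z.im})
    (hne : ¬ ∀ z ∈ {z : ℂ | 0 < z.im}, F z = 0)
    (hfe : ∀ m n : ℕ, 0 < m → 0 < n → ∀ z ∈ {z : ℂ | 0 < z.im},
      (F ((((m : ℝ) / (n : ℝ)) : ℂ) * z)) ^ n = (F z) ^ m) :
    ∃ α : ℂ, ∀ z ∈ {z : ℂ | 0 < z.im},
      F z = Complex.exp (2 * Real.pi * Complex.I * α * z) := by
  have hF0 : ∀ z ∈ {z : ℂ | 0 < z.im}, F z ≠ 0 := by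
    intro z₀ hz₀ h0
    refine hne fun z hz => ?_
    rw [eq_const_of_eq_on_rational_multiples hol hz₀ (fun m n hm hn => ?_) z hz, h0]
    have h := hfe m n hm hn z₀ hz₀
    rw [h0, zero_pow hm.ne'] at h
    rw [h0, eq_zero_of_pow_eq_zero h]
  have hd : ∀ z ∈ {z : ℂ | 0 < z.im}, HasDerivAt F (deriv F z) z := fun z hz =>
    (hol.differentiableAt (isOpen_im_pos.mem_nhds hz)).hasDerivAt
  have hGdiff : DifferentiableOn ℂ (logDeriv F) {z : ℂ | 0 < z.im} :=
    (hol.deriv isOpen_im_pos).div hol hF0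
  have hGinv : ∀ z ∈ {z : ℂ | 0 < z.im}, ∀ m n : ℕ, 0 < m → 0 < n →
      logDeriv F ((((m : ℝ) / (n : ℝ)) : ℂ) * z) = logDeriv F z := by
    intro z hz m n hm hn
    set r : ℂ := ((m : ℝ) : ℂ) / ((n : ℝ) : ℂ) with hr
    have hrz : r * z ∈ {z : ℂ | 0 < z.im} := ratio_mul_im_pos hm hn hz
    have hn0 : (n : ℂ) ≠ 0 := by exact_mod_cast hn.ne'
    have hm0 : (m : ℂ) ≠ 0 := by exact_mod_cast hm.ne'
    have h1 : logDeriv (fun w => F (r * w) ^ n) z = logDeriv (fun w => F w ^ m) z := by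
      refine Filter.EventuallyEq.eq_of_nhds (Filter.EventuallyEq.div ?_ ?_)
      · exact Filter.EventuallyEq.deriv
          (Filter.eventuallyEq_of_mem (isOpen_im_pos.mem_nhds hz) (hfe m n hm hn))
      · exact Filter.eventuallyEq_of_mem (isOpen_im_pos.mem_nhds hz) (hfe m n hm hn)
    have hcomp : HasDerivAt (fun w => F (r * w)) (deriv F (r * z) * r) z := by
      have := (hasDerivAt_id z).const_mul r
      simp only [id, mul_one] at this
      exact (hd _ hrz).comp z this
    rw [logDeriv_fun_pow hcomp.differentiableAt, logDeriv_fun_pow (hd z hz).differentiableAt,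
      logDeriv_apply, hcomp.deriv] at h1
    rw [logDeriv_apply F (r * z)]
    have hnr : (n : ℂ) * r = m := by
      rw [hr]
      push_cast
      field_simp
    refine mul_left_cancel₀ hm0 (Eq.trans ?_ h1)
    rw [← hnr]
    ring
  have hI : I ∈ {z : ℂ | 0 < z.im} := by simp
  set c := logDeriv F I
  have hGc : ∀ z ∈ {z : ℂ | 0 < z.im}, logDeriv F z = c :=
    eq_const_of_eq_on_rational_multiples hGdiff hI (hGinv I hI)
  have hquot : ∀ z ∈ {z : ℂ | 0 < z.im},
      HasDerivAt (fun w => F w * exp (-(c * w))) 0 z := by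
    intro z hz
    have he : HasDerivAt (fun w => exp (-(c * w))) (exp (-(c * z)) * -(c * 1)) z :=
      ((hasDerivAt_id z).const_mul c).neg.cexp
    refine ((hd z hz).mul he).congr_deriv ?_
    have h := hGc z hz
    rw [logDeriv_apply, div_eq_iff (hF0 z hz)] at h
    rw [h]
    ring
  obtain ⟨A, hA⟩ := isOpen_im_pos.exists_is_const_of_deriv_eq_zero isPreconnected_im_pos
    (fun z hz => (hquot z hz).differentiableAt.differentiableWithinAt)
    (fun z hz => (hquot z hz).deriv)
  have hFA : ∀ z ∈ {z : ℂ | 0 < z.im}, F z = A * exp (c * z) := by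
    intro z hz
    rw [← hA z hz, mul_assoc, ← exp_add]
    simp
  have hA1 : A = 1 := by
    have hA0 : A ≠ 0 := fun h0 => hF0 I hI (by rw [hFA I hI, h0, zero_mul])
    have h := hfe 2 1 two_pos one_pos I hI
    rw [hFA _ (ratio_mul_im_pos two_pos one_pos hI), hFA I hI, pow_one] at h
    have harg : c * ((((2 : ℕ) : ℝ) : ℂ) / (((1 : ℕ) : ℝ) : ℂ) * I) = (2 : ℕ) * (c * I) := by
      push_cast
      ring
    rw [harg, exp_nat_mul, mul_pow] at h
    have h2 := mul_right_cancel₀ (pow_ne_zero _ (exp_ne_zero _)) h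
    exact mul_left_cancel₀ hA0 (by linear_combination -h2)
  refine ⟨c / (2 * Real.pi * I), fun z hz => ?_⟩
  rw [hFA z hz, hA1, one_mul, mul_div_cancel₀ _ two_pi_I_ne_zero]
end

section
/- Let 𝒦 be an algebraic field extension of ℚ containing a primitive n-th root of unity for every positive integer n (e.g. any field containing ℚ^ab). Then for every α ∈ 𝒦 there exists a finite-dimensional intermediate field L of 𝒦/ℚ with α ∈ L such that Tr_{L/ℚ}(α·b) ∈ ℤ for every b ∈ 𝓞_L. In other words, the inverse different 𝔡_𝒦^{-1} = colim_L 𝔡_L^{-1}, taken over finite subextensions L, is all of 𝒦. (Claim at the end of §7 of the paper: if 𝒦 ⊇ ℚ^ab then 𝔡_𝒦^{-1} = 𝒦.) -/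
open IntermediateField in
/-- The trace of a power of a primitive `d ^ 2`-th root of unity is divisible by `d`. -/
theorem IsCyclotomicExtension.Rat.exists_trace_zeta_pow_eq_mul (d : ℕ) [NeZero d]
    (F : Type*) [Field F] [NumberField F] [IsCyclotomicExtension {d ^ 2} ℚ F] (i : ℕ) :
    ∃ m : ℤ, Algebra.trace ℚ F (IsCyclotomicExtension.zeta (d ^ 2) ℚ F ^ i) = d * m := by
  set ζ := IsCyclotomicExtension.zeta (d ^ 2) ℚ F
  have hζ : IsPrimitiveRoot ζ (d ^ 2) := IsCyclotomicExtension.zeta_spec (d ^ 2) ℚ F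
  have hcop : (1 + d).Coprime (d ^ 2) := by
    apply Nat.Coprime.pow_right
    simp
  have hirr : Irreducible (Polynomial.cyclotomic (d ^ 2) ℚ) :=
    Polynomial.cyclotomic.irreducible_rat (NeZero.pos _)
  obtain ⟨σ, hσ⟩ : ∃ σ : Gal(F/ℚ), σ ζ = ζ ^ (1 + d) :=
    ⟨_, IsCyclotomicExtension.fromZetaAut_spec (hζ.pow_of_coprime _ hcop) hirr⟩
  have hσd : σ (ζ ^ d) = ζ ^ d := by
    rw [map_pow, hσ, ← pow_mul, show (1 + d) * d = d + d ^ 2 by ring, pow_add, hζ.pow_eq_one,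
      mul_one]
  have hσk : ∀ k : ℕ, (σ ^ k) ζ = ζ * (ζ ^ d) ^ k := by
    intro k
    induction k with
    | zero => simp
    | succ k ih =>
      rw [pow_succ', AlgEquiv.mul_apply, ih, map_mul, map_pow, hσd, hσ]
      ring
  have hdvd : d ∣ orderOf σ := by
    have h := hσk (orderOf σ)
    rw [pow_orderOf_eq_one, AlgEquiv.one_apply, left_eq_mul₀ (hζ.ne_zero (NeZero.ne _)),
      ← pow_mul, hζ.pow_eq_one_iff_dvd, pow_two] at h
    exact Nat.dvd_of_mul_dvd_mul_left (NeZero.pos d) h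
  let E : IntermediateField ℚ F := fixedField (Subgroup.zpowers σ)
  have hmem : ζ ^ d ∈ E := by
    rw [mem_fixedField_iff]
    intro f hf
    have : Subgroup.zpowers σ ≤ MulAction.stabilizer Gal(F/ℚ) (ζ ^ d) := by
      rw [Subgroup.zpowers_le]
      exact hσd
    exact this hf
  let w : E := ⟨ζ ^ d, hmem⟩
  have hw : algebraMap E F w = ζ ^ d := rfl
  rw [← Algebra.trace_trace (S := E)]
  by_cases hi : d ∣ i
  · obtain ⟨j, rfl⟩ := hi
    obtain ⟨k, hk⟩ := hdvd
    have hfin : Module.finrank E F = d * k := by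
      rw [finrank_fixedField_eq_card, Nat.card_zpowers, hk]
    have hint : IsIntegral ℤ w := by
      rw [← isIntegral_algebraMap_iff (algebraMap E F).injective, hw]
      exact (hζ.isIntegral (NeZero.pos _)).pow d
    obtain ⟨m, hm⟩ := IsIntegrallyClosed.isIntegral_iff.mp
      (Algebra.isIntegral_trace (L := ℚ) (hint.pow j))
    refine ⟨k * m, ?_⟩
    rw [pow_mul, ← hw, ← map_pow, Algebra.trace_algebraMap, hfin, map_nsmul, ← hm]
    simp
    ring
  · refine ⟨0, ?_⟩
    have hσE : σ ∈ fixingSubgroup E := by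
      rw [fixingSubgroup_fixedField]
      exact Subgroup.mem_zpowers σ
    let τ : F ≃ₐ[E] F := fixingSubgroupEquiv E ⟨σ, hσE⟩
    have hτ : τ (ζ ^ i) = w ^ i • ζ ^ i := by
      change σ (ζ ^ i) = _
      rw [map_pow, hσ, Algebra.smul_def, map_pow, hw]
      ring
    have htr := Algebra.trace_eq_of_algEquiv τ (ζ ^ i)
    rw [hτ, map_smul, smul_eq_mul] at htr
    have hne : w ^ i ≠ 1 := by
      intro h
      apply hi
      have h' := congrArg (algebraMap E F) h
      rw [map_pow, hw, map_one, ← pow_mul, hζ.pow_eq_one_iff_dvd, pow_two] at h'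
      exact Nat.dvd_of_mul_dvd_mul_left (NeZero.pos d) h'
    have h0 : Algebra.trace E F (ζ ^ i) = 0 := by
      by_contra hne0
      exact hne (mul_right_cancel₀ hne0 (htr.trans (one_mul _).symm))
    simp [h0]

/-- Traces of integers of the `d ^ 2`-th cyclotomic field are divisible by `d`. -/
theorem IsCyclotomicExtension.Rat.exists_trace_eq_mul (d : ℕ) [NeZero d]
    (F : Type*) [Field F] [NumberField F] [IsCyclotomicExtension {d ^ 2} ℚ F]
    {x : F} (hx : IsIntegral ℤ x) :
    ∃ m : ℤ, Algebra.trace ℚ F x = d * m := by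
  have hζ := IsCyclotomicExtension.zeta_spec (d ^ 2) ℚ F
  have := IsCyclotomicExtension.Rat.isIntegralClosure_adjoin_singleton hζ
  obtain ⟨⟨y, hy⟩, rfl⟩ := (IsIntegralClosure.isIntegral_iff
    (A := Algebra.adjoin ℤ {IsCyclotomicExtension.zeta (d ^ 2) ℚ F})).mp hx
  change ∃ m : ℤ, Algebra.trace ℚ F y = d * m
  rw [Algebra.adjoin_singleton_eq_range_aeval] at hy
  obtain ⟨p, rfl⟩ := hy
  change ∃ m : ℤ, Algebra.trace ℚ F (Polynomial.aeval _ p) = d * m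
  choose m hm using exists_trace_zeta_pow_eq_mul d F
  refine ⟨p.sum fun i a => a * m i, ?_⟩
  simp only [Polynomial.aeval_eq_sum_range, Polynomial.sum_over_range, zero_mul, implies_true,
    map_sum, Int.cast_sum, Int.cast_mul, Finset.mul_sum]
  refine Finset.sum_congr rfl fun i _ => ?_
  rw [map_zsmul, hm, zsmul_eq_mul]
  ring

/-- If a number field contains a primitive `d ^ 2`-th root of unity, then the traces of its
integers are divisible by `d`. -/
theorem IsPrimitiveRoot.exists_trace_eq_mul {L : Type*} [Field L] [NumberField L] {d : ℕ}
    [NeZero d] {ζ : L} (hζ : IsPrimitiveRoot ζ (d ^ 2)) {x : L} (hx : IsIntegral ℤ x) :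
    ∃ m : ℤ, Algebra.trace ℚ L x = d * m := by
  have : IsCyclotomicExtension {d ^ 2} ℚ (IntermediateField.adjoin ℚ {ζ}) := by
    convert! hζ.intermediateField_adjoin_isCyclotomicExtension ℚ
  rw [← Algebra.trace_trace (S := IntermediateField.adjoin ℚ {ζ})]
  exact IsCyclotomicExtension.Rat.exists_trace_eq_mul d _ (Algebra.isIntegral_trace hx)

/-- Claim at the end of §7 of the paper: if `𝒦` contains `ℚ^ab` (expressed by
containing a primitive `n`-th root of unity for every `n > 0`), then every `α ∈ 𝒦`
lies in the inverse different of some finite-dimensional intermediate field `L`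
containing it, i.e. `𝔡_𝒦⁻¹ = colim_L 𝔡_L⁻¹ = 𝒦`. -/
theorem stmt_11 (𝒦 : Type*) [Field 𝒦] [Algebra ℚ 𝒦] [Algebra.IsAlgebraic ℚ 𝒦]
    (hroots : ∀ n : ℕ, 0 < n → ∃ ζ : 𝒦, IsPrimitiveRoot ζ n)
    (α : 𝒦) :
    ∃ L : IntermediateField ℚ 𝒦, FiniteDimensional ℚ L ∧
      ∃ hα : α ∈ L, ∀ b ∈ integralClosure ℤ L,
        ∃ n : ℤ, Algebra.trace ℚ L ((⟨α, hα⟩ : L) * b) = (n : ℚ) := by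
  obtain ⟨d, hd, hint⟩ : ∃ d : ℤ, d ≠ 0 ∧ IsIntegral ℤ (d • α) :=
    ((IsFractionRing.isAlgebraic_iff ℤ ℚ 𝒦).mpr
      (Algebra.IsAlgebraic.isAlgebraic (R := ℚ) α)).exists_integral_multiple
  have : NeZero d.natAbs := ⟨Int.natAbs_ne_zero.mpr hd⟩
  obtain ⟨ζ, hζ⟩ := hroots (d.natAbs ^ 2) (NeZero.pos _)
  let L : IntermediateField ℚ 𝒦 := IntermediateField.adjoin ℚ {α, ζ}
  have hα : α ∈ L := IntermediateField.subset_adjoin ℚ _ (by simp)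
  have hζL : ζ ∈ L := IntermediateField.subset_adjoin ℚ _ (by simp)
  have hfin : FiniteDimensional ℚ L :=
    IntermediateField.finiteDimensional_adjoin fun x _ =>
      (Algebra.IsAlgebraic.isAlgebraic x).isIntegral
  have : NumberField L := { to_finiteDimensional := by convert! hfin; exact Subsingleton.elim _ _ }
  refine ⟨L, hfin, hα, fun b hb => ?_⟩
  have hζ' : IsPrimitiveRoot (⟨ζ, hζL⟩ : L) (d.natAbs ^ 2) :=
    IsPrimitiveRoot.coe_submonoidClass_iff.mp hζ
  have ha : IsIntegral ℤ (d • (⟨α, hα⟩ : L)) := by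
    rw [← isIntegral_algebraMap_iff (algebraMap L 𝒦).injective]
    simpa using! hint
  obtain ⟨m, hm⟩ := hζ'.exists_trace_eq_mul (ha.mul hb)
  obtain ⟨e, he⟩ : d ∣ (d.natAbs : ℤ) * m := (Int.dvd_natAbs.mpr dvd_rfl).mul_right m
  refine ⟨e, mul_left_cancel₀ (Int.cast_ne_zero.mpr hd : (d : ℚ) ≠ 0) ?_⟩
  rw [smul_mul_assoc, map_zsmul, zsmul_eq_mul] at hm
  rw [hm, ← Int.cast_mul, ← he, Int.cast_mul, Int.cast_natCast]
end
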